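/- Let n ≥ 1 and let F be an n×n real matrix that is Hurwitz (every eigenvalue of F, viewed as a complex matrix, has negative real part). Let F̃ : ℝ → (n×n real matrices) and F̂ : ℝ → ℝⁿ be continuous, and suppose there exist constants c₀ > 0 and λ₀ > 0 such that ‖F̃(t)‖ ≤ c₀·exp(−λ₀ t) and ‖F̂(t)‖ ≤ c₀·exp(−λ₀ t) for all t ≥ 0. If x : ℝ → ℝⁿ is differentiable and satisfies ẋ(t) = F·x(t) + F̃(t)·x(t) + F̂(t) for all t ≥ 0, then x converges to zero exponentially: there exist c > 0 and λ > 0 such that ‖x(t)‖ ≤ c·exp(−λ t) for all t ≥ 0. (The key lemma used in the proof of Theorem 1: a Hurwitz linear system perturbed by exponentially vanishing terms remains exponentially stable.) -/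

import Mathlib

attribute [local instance] Matrix.normedAddCommGroup Matrix.normedSpace

open Filter

/-- If `z' + a z` has norm at most `(b + P e^{-μ t}) ‖z‖ + P e^{-μ t}` with `b < a`, then `z`
decays exponentially. -/
theorem exists_norm_le_exp_of_norm_deriv_add_smul_le {E : Type*} [NormedAddCommGroup E]
    [NormedSpace ℝ E] {z z' : ℝ → E} {a b P μ : ℝ} (hab : b < a) (hP : 0 ≤ P) (hμ : 0 < μ)
    (hz : ∀ t ≥ (0 : ℝ), HasDerivAt z (z' t) t)
    (hbound : ∀ t ≥ (0 : ℝ), ‖z' t + a • z t‖ ≤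
      (b + P * Real.exp (-μ * t)) * ‖z t‖ + P * Real.exp (-μ * t)) :
    ∃ c > 0, ∃ lam > 0, ∀ t ≥ (0 : ℝ), ‖z t‖ ≤ c * Real.exp (-lam * t) := by
  obtain ⟨lam, hlam, hlamμ, hlamab⟩ : ∃ lam > 0, lam ≤ μ ∧ lam < a - b :=
    ⟨min μ ((a - b) / 2), lt_min hμ (by linarith), min_le_left _ _,
      (min_le_right _ _).trans_lt (by linarith)⟩
  set K := P / μ with hK
  have hKμ : K * μ = P := div_mul_cancel₀ P hμ.ne'
  have hK0 : 0 ≤ K := div_nonneg hP hμ.le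
  have hδ : 0 < a - b - lam := by linarith
  obtain ⟨M, hM0, hMz, hMP⟩ : ∃ M > 0, ‖z 0‖ ≤ M * Real.exp (-K) ∧
      P < (a - b - lam) * (M * Real.exp (-K)) := by
    refine ⟨(‖z 0‖ + (P + 1) / (a - b - lam)) * Real.exp K, by positivity, ?_, ?_⟩
    · rw [mul_assoc, ← Real.exp_add, add_neg_cancel, Real.exp_zero, mul_one]
      have : 0 ≤ (P + 1) / (a - b - lam) := by positivity
      linarith
    · rw [mul_assoc _ _ (Real.exp (-K)), ← Real.exp_add, add_neg_cancel, Real.exp_zero, mul_one,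
        mul_add, mul_div_cancel₀ _ hδ.ne']
      have : 0 ≤ (a - b - lam) * ‖z 0‖ := by positivity
      linarith
  refine ⟨M, hM0, lam, hlam, fun T hT => ?_⟩
  set B : ℝ → ℝ := fun t => M * Real.exp ((a - lam) * t - K * Real.exp (-μ * t)) with hB
  have hexp : ∀ k t : ℝ, HasDerivAt (fun t => Real.exp (k * t)) (Real.exp (k * t) * k) t :=
    fun k t => by simpa using ((hasDerivAt_id t).const_mul k).exp
  have hB' : ∀ t, HasDerivAt B ((a - lam + P * Real.exp (-μ * t)) * B t) t := fun t => by
    have h := ((((hasDerivAt_id t).const_mul (a - lam)).sub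
      ((hexp (-μ) t).const_mul K)).exp).const_mul M
    refine h.congr_deriv ?_
    simp only [hB, ← hKμ, id, Pi.sub_apply]
    ring
  have hf : ∀ t ≥ (0 : ℝ), HasDerivAt (fun t => Real.exp (a * t) • z t)
      (Real.exp (a * t) • (z' t + a • z t)) t := fun t ht => by
    refine ((hexp a t).smul (hz t ht)).congr_deriv ?_
    rw [smul_add, smul_smul]
  have key := image_norm_le_of_norm_deriv_right_lt_deriv_boundary (a := 0) (b := T) (B := B)
    (fun t ht => (hf t ht.1).continuousAt.continuousWithinAt)
    (fun t ht => (hf t ht.1).hasDerivWithinAt) (by simpa [hB] using hMz) hB'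
    (fun t ht heq => ?_) (Set.right_mem_Icc.2 hT)
  · rw [norm_smul, Real.norm_of_nonneg (Real.exp_pos _).le] at key
    have h1 : B T ≤ Real.exp (a * T) * (M * Real.exp (-lam * T)) := by
      rw [mul_left_comm, ← Real.exp_add]
      refine mul_le_mul_of_nonneg_left (Real.exp_le_exp.2 ?_) hM0.le
      have : 0 ≤ K * Real.exp (-μ * T) := by positivity
      linarith
    exact le_of_mul_le_mul_left (key.trans h1) (Real.exp_pos _)
  · have ht : 0 ≤ t := ht.1
    rw [norm_smul, Real.norm_of_nonneg (Real.exp_pos _).le] at heq ⊢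
    have hlow : M * Real.exp (-K) * (Real.exp (a * t) * Real.exp (-μ * t)) ≤ B t := by
      rw [mul_assoc, ← Real.exp_add, ← Real.exp_add]
      refine mul_le_mul_of_nonneg_left (Real.exp_le_exp.2 ?_) hM0.le
      have h1 : Real.exp (-μ * t) ≤ 1 := Real.exp_le_one_iff.2 (by nlinarith)
      have h2 : K * Real.exp (-μ * t) ≤ K * 1 := mul_le_mul_of_nonneg_left h1 hK0
      have h3 : lam * t ≤ μ * t := mul_le_mul_of_nonneg_right hlamμ ht
      linarith
    have hpos : 0 < Real.exp (a * t) * Real.exp (-μ * t) := by positivity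
    have h4 := mul_lt_mul_of_pos_right hMP hpos
    have h5 := mul_le_mul_of_nonneg_left hlow hδ.le
    calc Real.exp (a * t) * ‖z' t + a • z t‖
        ≤ Real.exp (a * t) * ((b + P * Real.exp (-μ * t)) * ‖z t‖ + P * Real.exp (-μ * t)) :=
          mul_le_mul_of_nonneg_left (hbound t ht) (Real.exp_pos _).le
      _ = (b + P * Real.exp (-μ * t)) * B t + P * (Real.exp (a * t) * Real.exp (-μ * t)) := by
          rw [← heq]; ring
      _ < (a - lam + P * Real.exp (-μ * t)) * B t := by linarith

/-- An operator of spectral radius less than one is a strict contraction for an equivalent norm,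
realised as the norm pulled back along an embedding `L`. -/
theorem exists_embedding_contracting_of_spectralRadius_lt_one {E : Type*} [NormedAddCommGroup E]
    [NormedSpace ℂ E] [CompleteSpace E] (B : E →L[ℂ] E) (hB : spectralRadius ℂ B < 1) :
    ∃ (m : ℕ) (L : E →L[ℂ] (Fin m → E)) (r : ℝ), r < 1 ∧
      (∀ v, ‖v‖ ≤ ‖L v‖) ∧ ∀ v, ‖L (B v)‖ ≤ r * ‖L v‖ := by
  obtain ⟨r, hBr, hr1⟩ := ENNReal.lt_iff_exists_nnreal_btwn.1 hB
  have hr0 : 0 < (r : ℝ) := by exact_mod_cast (zero_le).trans_lt hBr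
  have hr1 : (r : ℝ) < 1 := by exact_mod_cast hr1
  obtain ⟨N, hN, hN0⟩ := (((spectrum.pow_nnnorm_pow_one_div_tendsto_nhds_spectralRadius
    B).eventually_lt_const hBr).and (Filter.eventually_gt_atTop 0)).exists
  obtain ⟨m, rfl⟩ := Nat.exists_eq_succ_of_ne_zero hN0.ne'
  have hpow : ‖B ^ (m + 1)‖ ≤ (r : ℝ) ^ (m + 1) := by
    have h := ENNReal.rpow_le_rpow hN.le (z := ((m + 1 : ℕ) : ℝ)) (by positivity)
    rw [← ENNReal.rpow_mul, one_div, inv_mul_cancel₀ (by positivity), ENNReal.rpow_one,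
      ENNReal.rpow_natCast] at h
    exact_mod_cast h
  set L : E →L[ℂ] (Fin (m + 1) → E) :=
    ContinuousLinearMap.pi fun k => (((r : ℝ)⁻¹ ^ (k : ℕ) : ℝ) : ℂ) • B ^ (k : ℕ) with hL
  have hLnorm : ∀ v k, ‖L v k‖ = (r : ℝ)⁻¹ ^ (k : ℕ) * ‖(B ^ (k : ℕ)) v‖ := fun v k => by
    simp only [hL, ContinuousLinearMap.pi_apply, smul_apply, norm_smul,
      Complex.norm_real]
    rw [Real.norm_of_nonneg (by positivity)]
  have hle : ∀ v, ‖v‖ ≤ ‖L v‖ := fun v => by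
    simpa [hLnorm] using norm_le_pi_norm (L v) 0
  refine ⟨m + 1, L, r, hr1, hle, fun v => ?_⟩
  refine (pi_norm_le_iff_of_nonneg (by positivity)).2 fun k => ?_
  have hstep : ‖L (B v) k‖ = r * ((r : ℝ)⁻¹ ^ ((k : ℕ) + 1) * ‖(B ^ ((k : ℕ) + 1)) v‖) := by
    rw [hLnorm, pow_succ B, pow_succ (r : ℝ)⁻¹]
    simp only [mul_apply_eq_comp]
    field_simp
  rw [hstep]
  refine mul_le_mul_of_nonneg_left ?_ hr0.le
  rcases (Nat.lt_succ_iff.1 k.2).lt_or_eq with hk | hk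
  · exact (hLnorm v ⟨k + 1, by omega⟩).symm.le.trans (norm_le_pi_norm (L v) _)
  · rw [hk]
    calc (r : ℝ)⁻¹ ^ (m + 1) * ‖(B ^ (m + 1)) v‖
        ≤ (r : ℝ)⁻¹ ^ (m + 1) * ((r : ℝ) ^ (m + 1) * ‖v‖) := by
          gcongr
          exact (B ^ (m + 1)).le_of_opNorm_le hpow v
      _ = ‖v‖ := by rw [← mul_assoc, ← mul_pow, inv_mul_cancel₀ hr0.ne', one_pow, one_mul]
      _ ≤ ‖L v‖ := hle v

/-- A small explicit Euler step along an element whose spectrum lies in the open left half-plane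
has spectral radius less than one. -/
theorem exists_spectralRadius_one_add_smul_lt_one {A : Type*} [NormedRing A] [NormedAlgebra ℂ A]
    [CompleteSpace A] [NormOneClass A] [Nontrivial A] (a : A)
    (ha : ∀ μ ∈ spectrum ℂ a, μ.re < 0) :
    ∃ h : ℝ, 0 < h ∧ spectralRadius ℂ (1 + (h : ℂ) • a) < 1 := by
  obtain ⟨ν, hν, hmax⟩ := (spectrum.isCompact (𝕜 := ℂ) a).exists_isMaxOn (spectrum.nonempty a)
    Complex.continuous_re.continuousOn
  have hδ := ha ν hν
  set h : ℝ := -ν.re / (‖a‖ ^ 2 + 1) with hh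
  have hh0 : 0 < h := div_pos (by linarith) (by positivity)
  refine ⟨h, hh0, spectrum.spectralRadius_lt_of_forall_lt (r := 1) _ fun z hz => ?_⟩
  have hpoly : (1 + (h : ℂ) • a) =
      Polynomial.aeval a (1 + Polynomial.C (h : ℂ) * Polynomial.X) := by
    simp [Algebra.smul_def]
  rw [hpoly, spectrum.map_polynomial_aeval] at hz
  obtain ⟨μ, hμ, rfl⟩ := hz
  have hre : μ.re ≤ ν.re := hmax hμ
  have hnorm : ‖μ‖ ≤ ‖a‖ := spectrum.norm_le_norm_of_mem hμ
  have hmul : h * (‖a‖ ^ 2 + 1) = -ν.re := div_mul_cancel₀ _ (by positivity)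
  have hsq : ‖μ‖ ^ 2 ≤ ‖a‖ ^ 2 := by gcongr
  rw [← NNReal.coe_lt_coe, coe_nnnorm, NNReal.coe_one, ← sq_lt_one_iff₀ (norm_nonneg _),
    Complex.sq_norm, Complex.normSq_apply]
  rw [Complex.sq_norm, Complex.normSq_apply] at hsq
  simp only [Polynomial.eval_add, Polynomial.eval_one, Polynomial.eval_mul, Polynomial.eval_C,
    Polynomial.eval_X, Complex.add_re, Complex.one_re, Complex.mul_re, Complex.ofReal_re,
    Complex.ofReal_im, Complex.add_im, Complex.one_im, Complex.mul_im]
  have h1 : h * (h * (μ.re * μ.re + μ.im * μ.im)) ≤ h * (-ν.re - h) := by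
    refine mul_le_mul_of_nonneg_left ?_ hh0.le
    have := mul_le_mul_of_nonneg_left hsq hh0.le
    linarith
  have h2 := mul_le_mul_of_nonneg_left hre hh0.le
  have h3 : h * ν.re < 0 := mul_neg_of_pos_of_neg hh0 hδ
  nlinarith [mul_pos hh0 hh0]

theorem norm_mulVec_le_card_mul {m n : Type*} [Fintype m] [Fintype n] (A : Matrix m n ℝ)
    (v : n → ℝ) : ‖A.mulVec v‖ ≤ Fintype.card n * ‖A‖ * ‖v‖ := by
  refine (pi_norm_le_iff_of_nonneg (by positivity)).2 fun i => ?_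
  calc ‖∑ j, A i j * v j‖ ≤ ∑ j, ‖A i j * v j‖ := norm_sum_le _ _
    _ ≤ ∑ _j : n, ‖A‖ * ‖v‖ := Finset.sum_le_sum fun j _ => by
        rw [norm_mul]
        exact mul_le_mul (Matrix.norm_entry_le_entrywise_sup_norm A) (norm_le_pi_norm v j)
          (norm_nonneg _) (norm_nonneg _)
    _ = Fintype.card n * ‖A‖ * ‖v‖ := by simp [mul_assoc]

/-- Coordinatewise complexification of real vectors. -/
noncomputable def complexify (ι : Type*) [Fintype ι] : (ι → ℝ) →L[ℝ] (ι → ℂ) :=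
  ContinuousLinearMap.pi fun i => Complex.ofRealCLM.comp (ContinuousLinearMap.proj i)

theorem complexify_apply {ι : Type*} [Fintype ι] (v : ι → ℝ) (i : ι) :
    complexify ι v i = (v i : ℂ) := rfl

theorem norm_complexify {ι : Type*} [Fintype ι] (v : ι → ℝ) : ‖complexify ι v‖ = ‖v‖ := by
  simp [Pi.norm_def, complexify_apply]

theorem complexify_mulVec {ι : Type*} [Fintype ι] (F : Matrix ι ι ℝ) (v : ι → ℝ) :
    complexify ι (F.mulVec v) = (F.map Complex.ofReal).mulVec (complexify ι v) := by
  ext i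
  simp [complexify_apply, Matrix.mulVec, dotProduct]

/-- A Hurwitz linear system perturbed by exponentially vanishing terms remains
exponentially stable (key lemma in the proof of Theorem 1). -/
theorem hurwitz_with_vanishing_perturbation
    (n : ℕ) (hn : 1 ≤ n)
    (F : Matrix (Fin n) (Fin n) ℝ)
    (hF : ∀ μ ∈ spectrum ℂ (F.map (Complex.ofReal)), μ.re < 0)
    (Ftil : ℝ → Matrix (Fin n) (Fin n) ℝ) (Fhat : ℝ → Fin n → ℝ)
    (hFtilCont : Continuous Ftil) (hFhatCont : Continuous Fhat)
    (c₀ lam₀ : ℝ) (hc₀ : 0 < c₀) (hlam₀ : 0 < lam₀)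
    (hFtilBound : ∀ t ≥ (0 : ℝ), ‖Ftil t‖ ≤ c₀ * Real.exp (-lam₀ * t))
    (hFhatBound : ∀ t ≥ (0 : ℝ), ‖Fhat t‖ ≤ c₀ * Real.exp (-lam₀ * t))
    (x : ℝ → Fin n → ℝ)
    (hx : ∀ t ≥ (0 : ℝ),
      HasDerivAt x (F.mulVec (x t) + (Ftil t).mulVec (x t) + Fhat t) t) :
    ∃ c > 0, ∃ lam > 0, ∀ t ≥ (0 : ℝ), ‖x t‖ ≤ c * Real.exp (-lam * t) := by
  have : Nonempty (Fin n) := ⟨⟨0, hn⟩⟩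
  set A : (Fin n → ℂ) →L[ℂ] (Fin n → ℂ) :=
    Module.End.toContinuousLinearMap (Fin n → ℂ) (Matrix.toLin' (F.map Complex.ofReal)) with hA
  have hAapp : ∀ v, A v = (F.map Complex.ofReal).mulVec v := fun v => rfl
  have hspec : spectrum ℂ A = spectrum ℂ (F.map Complex.ofReal) := by
    rw [hA, AlgEquiv.spectrum_eq, Matrix.spectrum_toLin']
  obtain ⟨h, hh, hrad⟩ := exists_spectralRadius_one_add_smul_lt_one A (hspec ▸ hF)
  obtain ⟨m, L, r, hr, hle, hcontr⟩ :=
    exists_embedding_contracting_of_spectralRadius_lt_one _ hrad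
  set J : (Fin n → ℝ) →L[ℝ] (Fin m → Fin n → ℂ) :=
    (L.restrictScalars ℝ).comp (complexify (Fin n)) with hJ
  have hJle : ∀ v, ‖v‖ ≤ ‖J v‖ := fun v => (norm_complexify v).symm.le.trans (hle _)
  have hJcontr : ∀ v, ‖J (F.mulVec v) + h⁻¹ • J v‖ ≤ h⁻¹ * r * ‖J v‖ := fun v => by
    have heq : J (F.mulVec v) + h⁻¹ • J v =
        h⁻¹ • L ((1 + (h : ℂ) • A) (complexify (Fin n) v)) := by
      have : (1 + (h : ℂ) • A) (complexify (Fin n) v) =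
          complexify (Fin n) (v + h • F.mulVec v) := by
        rw [map_add, map_smul, complexify_mulVec, ← hAapp]
        rfl
      rw [this]
      change _ = h⁻¹ • J (v + h • F.mulVec v)
      rw [map_add, map_smul, smul_add, smul_smul, inv_mul_cancel₀ hh.ne', one_smul, add_comm]
    rw [heq, norm_smul, Real.norm_of_nonneg (inv_nonneg.2 hh.le), mul_assoc]
    exact mul_le_mul_of_nonneg_left (hcontr _) (inv_nonneg.2 hh.le)
  obtain ⟨c, hc, lam, hlam, hdecay⟩ := exists_norm_le_exp_of_norm_deriv_add_smul_le
    (z := fun t => J (x t)) (a := h⁻¹) (b := h⁻¹ * r) (P := ‖J‖ * (n * c₀)) (μ := lam₀)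
    (mul_lt_of_lt_one_right (inv_pos.2 hh) hr) (by positivity) hlam₀
    (fun t ht => J.hasFDerivAt.comp_hasDerivAt t (hx t ht)) fun t ht => by
      have hn1 : (1 : ℝ) ≤ n := by exact_mod_cast hn
      have hsplit : J (F.mulVec (x t) + (Ftil t).mulVec (x t) + Fhat t) + h⁻¹ • J (x t) =
          (J (F.mulVec (x t)) + h⁻¹ • J (x t)) + J ((Ftil t).mulVec (x t) + Fhat t) := by
        simp only [map_add]
        abel
      have hpert : ‖(Ftil t).mulVec (x t) + Fhat t‖ ≤
          n * (c₀ * Real.exp (-lam₀ * t)) * ‖J (x t)‖ + n * (c₀ * Real.exp (-lam₀ * t)) := by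
        refine norm_add_le_of_le ?_ ?_
        · refine (norm_mulVec_le_card_mul _ _).trans ?_
          rw [Fintype.card_fin]
          gcongr
          exacts [hFtilBound t ht, hJle _]
        · exact (hFhatBound t ht).trans (le_mul_of_one_le_left (by positivity) hn1)
      rw [hsplit]
      refine (norm_add_le_of_le (hJcontr _) (J.le_opNorm_of_le hpert)).trans (le_of_eq ?_)
      ring
  exact ⟨c, hc, lam, hlam, fun t ht => (hJle _).trans (hdecay t ht)⟩
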